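/- (Proposition 4.2) In the Gaussian observation model ω = Ax + ξ with ξ ∼ N(0, I_L), where X ⊆ ℝⁿ is convex compact, A is an L×n matrix and g ∈ ℝⁿ, for every ε ∈ (0, 1/2) one can build an affine estimate ĝ_ε such that Risk(ĝ_ε; ε) ≤ [ErfInv(ε/2)/ErfInv(ε)]·Risk_*(ε). Specifically, with Ψ(x, y; φ) = gᵀx − gᵀy + φᵀA(y − x) + 2·ErfInv(ε/2)·‖φ‖₂ on (X×X)×ℝ^L, the saddle-point value 2Ψ_*(ε) = inf_φ max_{x,y∈X} Ψ(x, y; φ) is attained at some φ_*, and the affine estimate ĝ_ε(ω) = φ_*ᵀω + c_* with c_* = (1/2)[max_{x∈X}(gᵀx − φ_*ᵀAx) − max_{y∈X}(−gᵀy + φ_*ᵀAy)] satisfies Risk(ĝ_ε; ε) ≤ Ψ_*(ε) ≤ [ErfInv(ε/2)/ErfInv(ε)]·Risk_*(ε); note that ErfInv(ε/2)/ErfInv(ε) < √(2·ln(2/ε))/ErfInv(ε). -/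

import Mathlib

open MeasureTheory Real Matrix Set Filter
open scoped ENNReal Topology

/-- The standard Gaussian `N(0, I_L)` density on `ℝ^L`. -/
noncomputable def stdGaussDensity {L : ℕ} (ω : Fin L → ℝ) : ℝ :=
  (2 * Real.pi) ^ (-(L : ℝ) / 2) * Real.exp (-(∑ i, ω i ^ 2) / 2)

/-- The distribution `N(Ax, I_L)` of the observation `ω = Ax + ξ`, `ξ ∼ N(0, I_L)`. -/
noncomputable def gaussObs {L n : ℕ} (A : Matrix (Fin L) (Fin n) ℝ) (x : Fin n → ℝ) :
    Measure (Fin L → ℝ) :=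
  volume.withDensity fun ω => ENNReal.ofReal (stdGaussDensity (ω - A.mulVec x))

/-- The Euclidean norm `‖v‖₂` on `ℝ^L`. -/
noncomputable def euclNorm {L : ℕ} (v : Fin L → ℝ) : ℝ :=
  Real.sqrt (∑ i, v i ^ 2)

/-- The `ε`-risk of an estimate `ghat` in the Gaussian observation model. -/
noncomputable def gaussRisk {L n : ℕ} (A : Matrix (Fin L) (Fin n) ℝ)
    (g : Fin n → ℝ) (X : Set (Fin n → ℝ)) (ghat : (Fin L → ℝ) → ℝ) (ε : ℝ) : ℝ :=
  sInf {δ : ℝ |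
    (⨆ x ∈ X, gaussObs A x {ω | δ < |ghat ω - g ⬝ᵥ x|}) < ENNReal.ofReal ε}

/-- The minimax optimal `ε`-risk over all Borel estimates in the Gaussian model. -/
noncomputable def gaussRiskStar {L n : ℕ} (A : Matrix (Fin L) (Fin n) ℝ)
    (g : Fin n → ℝ) (X : Set (Fin n → ℝ)) (ε : ℝ) : ℝ :=
  sInf {ρ : ℝ | ∃ ghat : (Fin L → ℝ) → ℝ, Measurable ghat ∧
    ρ = gaussRisk A g X ghat ε}

/-- The function `Φ_r(x, y; φ, α)` of the Gaussian model (with linear `φ`). -/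
noncomputable def gaussPhi {L n : ℕ} (A : Matrix (Fin L) (Fin n) ℝ) (g : Fin n → ℝ)
    (r : ℝ) (x y : Fin n → ℝ) (φ : Fin L → ℝ) (α : ℝ) : ℝ :=
  g ⬝ᵥ x - g ⬝ᵥ y
    + α * Real.log (∫ ω : Fin L → ℝ,
        Real.exp (-(φ ⬝ᵥ ω) / α) * stdGaussDensity (ω - A.mulVec x))
    + α * Real.log (∫ ω : Fin L → ℝ,
        Real.exp ((φ ⬝ᵥ ω) / α) * stdGaussDensity (ω - A.mulVec y))
    + 2 * α * r

/-- `Φ_*(r)`: `2Φ_*(r) = sup_{x,y∈X} inf_{φ∈ℝ^L, α>0} Φ_r(x,y;φ,α)`. -/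
noncomputable def gaussPhiStar {L n : ℕ} (A : Matrix (Fin L) (Fin n) ℝ)
    (g : Fin n → ℝ) (X : Set (Fin n → ℝ)) (r : ℝ) : ℝ :=
  (1/2) * sSup {v : ℝ | ∃ x ∈ X, ∃ y ∈ X,
    v = sInf {w : ℝ | ∃ φ : Fin L → ℝ, ∃ α : ℝ, 0 < α ∧
      w = gaussPhi A g r x y φ α}}

/-- The standard Gaussian upper tail probability `y = (1/√(2π)) ∫_x^∞ e^{−t²/2} dt`. -/
noncomputable def gaussTail (x : ℝ) : ℝ :=
  (Real.sqrt (2 * Real.pi))⁻¹ * ∫ t in Set.Ioi x, Real.exp (-t ^ 2 / 2)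

/-- The inverse error function `ErfInv`: for `y ∈ (0, 1/2)`, `ErfInv y` is the
unique `x` with `gaussTail x = y` (realized here as an infimum). -/
noncomputable def erfInv (y : ℝ) : ℝ :=
  sInf {x : ℝ | gaussTail x ≤ y}

/-- The function `Ψ(x, y; φ) = gᵀx − gᵀy + φᵀA(y − x) + 2·ErfInv(ε/2)·‖φ‖₂`. -/
noncomputable def PsiFun {L n : ℕ} (A : Matrix (Fin L) (Fin n) ℝ) (g : Fin n → ℝ)
    (ε : ℝ) (x y : Fin n → ℝ) (φ : Fin L → ℝ) : ℝ :=
  g ⬝ᵥ x - g ⬝ᵥ y + φ ⬝ᵥ A.mulVec (y - x) + 2 * erfInv (ε / 2) * euclNorm φ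

/-- `Ψ̄(φ) = max_{x,y∈X} Ψ(x, y; φ)`. -/
noncomputable def PsiBar {L n : ℕ} (A : Matrix (Fin L) (Fin n) ℝ) (g : Fin n → ℝ)
    (ε : ℝ) (X : Set (Fin n → ℝ)) (φ : Fin L → ℝ) : ℝ :=
  sSup {v : ℝ | ∃ x ∈ X, ∃ y ∈ X, v = PsiFun A g ε x y φ}

/-- `Ψ_*(ε) = (1/2)·inf_φ Ψ̄(φ)`. -/
noncomputable def PsiStar {L n : ℕ} (A : Matrix (Fin L) (Fin n) ℝ) (g : Fin n → ℝ)
    (ε : ℝ) (X : Set (Fin n → ℝ)) : ℝ :=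
  (1/2) * sInf {v : ℝ | ∃ φ : Fin L → ℝ, v = PsiBar A g ε X φ}

/-- The centering constant
`c_* = (1/2)[max_{x∈X}(gᵀx − φᵀAx) − max_{y∈X}(−gᵀy + φᵀAy)]`. -/
noncomputable def cStar {L n : ℕ} (A : Matrix (Fin L) (Fin n) ℝ) (g : Fin n → ℝ)
    (X : Set (Fin n → ℝ)) (φ : Fin L → ℝ) : ℝ :=
  (1/2) * (sSup {v : ℝ | ∃ x ∈ X, v = g ⬝ᵥ x - φ ⬝ᵥ A.mulVec x}
    - sSup {v : ℝ | ∃ y ∈ X, v = -(g ⬝ᵥ y) + φ ⬝ᵥ A.mulVec y})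

/-!
The risk of an affine estimate `ω ↦ φᵀω + c` splits into its worst-case bias and the Gaussian noise
`φᵀξ`. The centering constant `c_*` makes the extreme biases over `X` symmetric, and then half of
`Ψ̄(φ)` is exactly the bias plus the `ε / 2`-quantile of the noise, so that `Risk ≤ Ψ̄(φ) / 2`.

Conversely, by the minimax theorem some `x, y ∈ X` satisfy `gᵀx - gᵀy ≥ 2 Ψ_*` and
`‖A(x - y)‖₂ ≤ 2 ErfInv(ε / 2)`. Shrinking the segment `[y, x]` by the factor
`ErfInv(ε) / ErfInv(ε / 2)` yields two signals which no test separates with both error probabilities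
below `ε` (Neyman–Pearson), so every estimate has risk at least half of the difference of `g` on
them (Le Cam).
-/

section GaussTail

lemma integrable_exp_neg_sq_half : Integrable fun t : ℝ => Real.exp (-t ^ 2 / 2) := by
  have h := integrable_exp_neg_mul_sq (b := 1 / 2) (by norm_num)
  refine h.congr (Eventually.of_forall fun t => ?_)
  simp only
  ring_nf

lemma integral_Ioi_zero_exp_neg_sq_half :
    ∫ t in Ioi (0 : ℝ), Real.exp (-t ^ 2 / 2) = √(2 * π) / 2 := by
  rw [show 2 * π = π / (1 / 2) by ring, ← integral_gaussian_Ioi]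
  refine integral_congr_ae (Eventually.of_forall fun t => ?_)
  simp only
  ring_nf

lemma gaussTail_zero : gaussTail 0 = 1 / 2 := by
  have : √(2 * π) ≠ 0 := by positivity
  rw [gaussTail, integral_Ioi_zero_exp_neg_sq_half]
  field_simp

lemma gaussTail_sub_gaussTail (x y : ℝ) :
    gaussTail x - gaussTail y = (√(2 * π))⁻¹ * ∫ t in x..y, Real.exp (-t ^ 2 / 2) := by
  rw [gaussTail, gaussTail, ← mul_sub,
    intervalIntegral.integral_Ioi_sub_Ioi' integrable_exp_neg_sq_half.integrableOn
      integrable_exp_neg_sq_half.integrableOn]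

lemma continuous_gaussTail : Continuous gaussTail := by
  have hprim := intervalIntegral.continuous_primitive
    (fun a b => integrable_exp_neg_sq_half.intervalIntegrable (a := a) (b := b)) 0
  have heq : gaussTail
      = fun x => gaussTail 0 - (√(2 * π))⁻¹ * ∫ t in (0 : ℝ)..x, Real.exp (-t ^ 2 / 2) :=
    funext fun x => by rw [← gaussTail_sub_gaussTail, sub_sub_cancel]
  exact heq ▸ continuous_const.sub (continuous_const.mul hprim)

lemma strictAnti_gaussTail : StrictAnti gaussTail := by
  intro x y hxy
  rw [← sub_pos, gaussTail_sub_gaussTail]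
  exact mul_pos (by positivity) (intervalIntegral.intervalIntegral_pos_of_pos
    integrable_exp_neg_sq_half.intervalIntegrable (fun t => Real.exp_pos _) hxy)

lemma gaussTail_le_half_mul_exp {x : ℝ} (hx : 0 ≤ x) :
    gaussTail x ≤ 1 / 2 * Real.exp (-x ^ 2 / 2) := by
  have hshift : ∫ t in Ioi x, Real.exp (-t ^ 2 / 2)
      = ∫ s in Ioi (0 : ℝ), Real.exp (-(s + x) ^ 2 / 2) := by
    simpa using ((measurePreserving_add_right volume x).setIntegral_preimage_emb
      (measurableEmbedding_addRight x) (fun t : ℝ => Real.exp (-t ^ 2 / 2)) (Ioi x)).symm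
  have hexp_le : ∀ s ∈ Ioi (0 : ℝ),
      Real.exp (-(s + x) ^ 2 / 2) ≤ Real.exp (-x ^ 2 / 2) * Real.exp (-s ^ 2 / 2) := by
    intro s hs
    rw [← Real.exp_add, Real.exp_le_exp]
    nlinarith [mul_nonneg hx (mem_Ioi.mp hs).le]
  calc gaussTail x
      = (√(2 * π))⁻¹ * ∫ s in Ioi (0 : ℝ), Real.exp (-(s + x) ^ 2 / 2) := by
        rw [gaussTail, hshift]
    _ ≤ (√(2 * π))⁻¹ * ∫ s in Ioi (0 : ℝ), Real.exp (-x ^ 2 / 2) * Real.exp (-s ^ 2 / 2) := by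
        gcongr ?_ * ?_
        exact setIntegral_mono_on (integrable_exp_neg_sq_half.comp_add_right x).integrableOn
          (integrable_exp_neg_sq_half.const_mul _).integrableOn measurableSet_Ioi hexp_le
    _ = 1 / 2 * Real.exp (-x ^ 2 / 2) := by
        have : √(2 * π) ≠ 0 := by positivity
        rw [integral_const_mul, integral_Ioi_zero_exp_neg_sq_half]
        field_simp

lemma gaussTail_sqrt_two_mul_log_lt {y : ℝ} (hy : 0 < y) (hy' : y ≤ 1) :
    gaussTail √(2 * Real.log (1 / y)) < y := by
  have hlog : 0 ≤ Real.log (1 / y) := Real.log_nonneg (by rwa [le_div_iff₀ hy, one_mul])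
  calc gaussTail √(2 * Real.log (1 / y))
      ≤ 1 / 2 * Real.exp (-√(2 * Real.log (1 / y)) ^ 2 / 2) :=
        gaussTail_le_half_mul_exp (Real.sqrt_nonneg _)
    _ = 1 / 2 * y := by
        rw [Real.sq_sqrt (by positivity), one_div y, Real.log_inv,
          show -(2 * -Real.log y) / 2 = Real.log y by ring, Real.exp_log hy]
    _ < y := by linarith

lemma erfInv_gaussTail (x : ℝ) : erfInv (gaussTail x) = x := by
  have : {z : ℝ | gaussTail z ≤ gaussTail x} = Ici x :=
    Set.ext fun z => strictAnti_gaussTail.le_iff_ge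
  rw [erfInv, this, csInf_Ici]

variable {y : ℝ}

lemma gaussTail_erfInv (hy : 0 < y) (hy' : y ≤ 1 / 2) : gaussTail (erfInv y) = y := by
  obtain ⟨x, -, rfl⟩ := intermediate_value_Icc' (Real.sqrt_nonneg (2 * Real.log (1 / y)))
    continuous_gaussTail.continuousOn
    ⟨(gaussTail_sqrt_two_mul_log_lt hy (by linarith)).le, gaussTail_zero ▸ hy'⟩
  rw [erfInv_gaussTail]

lemma erfInv_pos (hy : 0 < y) (hy' : y < 1 / 2) : 0 < erfInv y := by
  rwa [← strictAnti_gaussTail.lt_iff_gt, gaussTail_erfInv hy hy'.le, gaussTail_zero]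

lemma strictAntiOn_erfInv : StrictAntiOn erfInv (Ioc 0 (1 / 2)) := by
  rintro y ⟨hy, hy'⟩ z ⟨hz, hz'⟩ hyz
  rwa [← strictAnti_gaussTail.lt_iff_gt, gaussTail_erfInv hy hy', gaussTail_erfInv hz hz']

lemma erfInv_lt_sqrt_two_mul_log (hy : 0 < y) (hy' : y ≤ 1 / 2) :
    erfInv y < √(2 * Real.log (1 / y)) := by
  rw [← strictAnti_gaussTail.lt_iff_gt, gaussTail_erfInv hy hy']
  exact gaussTail_sqrt_two_mul_log_lt hy (by linarith)

end GaussTail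

section EuclNorm

variable {L : ℕ}

lemma euclNorm_eq_norm (v : Fin L → ℝ) : euclNorm v = ‖WithLp.toLp 2 v‖ := by
  simp [euclNorm, EuclideanSpace.norm_eq]

lemma euclNorm_nonneg (v : Fin L → ℝ) : 0 ≤ euclNorm v := Real.sqrt_nonneg _

lemma euclNorm_sq (v : Fin L → ℝ) : euclNorm v ^ 2 = v ⬝ᵥ v := by
  rw [euclNorm, Real.sq_sqrt (Finset.sum_nonneg fun i _ => sq_nonneg _), dotProduct]
  exact Finset.sum_congr rfl fun i _ => sq _

lemma euclNorm_smul (c : ℝ) (v : Fin L → ℝ) : euclNorm (c • v) = |c| * euclNorm v := by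
  rw [euclNorm_eq_norm, euclNorm_eq_norm, WithLp.toLp_smul, norm_smul, Real.norm_eq_abs]

lemma euclNorm_eq_zero {v : Fin L → ℝ} : euclNorm v = 0 ↔ v = 0 := by
  rw [euclNorm_eq_norm, norm_eq_zero, WithLp.toLp_eq_zero]

lemma continuous_euclNorm : Continuous (euclNorm : (Fin L → ℝ) → ℝ) := by
  unfold euclNorm; fun_prop

lemma norm_le_euclNorm (v : Fin L → ℝ) : ‖v‖ ≤ euclNorm v := by
  rw [euclNorm_eq_norm]
  exact (pi_norm_le_iff_of_nonneg (norm_nonneg _)).mpr (PiLp.norm_apply_le (WithLp.toLp 2 v))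

lemma convexOn_euclNorm : ConvexOn ℝ univ (euclNorm : (Fin L → ℝ) → ℝ) := by
  rw [funext euclNorm_eq_norm]
  exact convexOn_univ_norm.comp_linearMap (WithLp.linearEquiv 2 ℝ (Fin L → ℝ)).symm.toLinearMap

lemma euclNorm_le_of_forall_dotProduct_le {v : Fin L → ℝ} {c q : ℝ} (hq : 0 ≤ q)
    (h : ∀ φ, φ ⬝ᵥ v ≤ c + q * euclNorm φ) : euclNorm v ≤ q := by
  by_contra! hlt
  have hpos : 0 < euclNorm v * (euclNorm v - q) :=
    mul_pos (hq.trans_lt hlt) (sub_pos.mpr hlt)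
  obtain ⟨k, hk⟩ := exists_nat_gt (c / (euclNorm v * (euclNorm v - q)))
  have hkv := h ((k : ℝ) • v)
  rw [smul_dotProduct, ← euclNorm_sq, euclNorm_smul, abs_of_nonneg k.cast_nonneg,
    smul_eq_mul] at hkv
  rw [div_lt_iff₀ hpos] at hk
  linarith

end EuclNorm

section StandardNormal

open ProbabilityTheory

lemma gaussianReal_zero_one_Ioi (x : ℝ) :
    gaussianReal 0 1 (Ioi x) = ENNReal.ofReal (gaussTail x) := by
  rw [gaussianReal_apply_eq_integral 0 one_ne_zero, gaussTail, ← integral_const_mul]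
  congr 1
  refine integral_congr_ae (Eventually.of_forall fun t => ?_)
  simp [gaussianPDFReal]

lemma gaussianReal_zero_one_Iic_neg (x : ℝ) :
    gaussianReal 0 1 (Iic (-x)) = ENNReal.ofReal (gaussTail x) := by
  have hsymm : (gaussianReal 0 1).map (fun z => -z) = gaussianReal 0 1 := by
    rw [gaussianReal_map_neg, neg_zero]
  have := nullSingletonClass_gaussianReal (μ := 0) one_ne_zero
  rw [← hsymm, Measure.map_apply measurable_neg measurableSet_Iic, neg_preimage, neg_Iic, neg_neg,
    ← measure_congr Ioi_ae_eq_Ici, gaussianReal_zero_one_Ioi]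

lemma gaussianReal_zero_one_lt_abs_le (x : ℝ) :
    gaussianReal 0 1 {z | x < |z|} ≤ 2 * ENNReal.ofReal (gaussTail x) := by
  have hsub : {z : ℝ | x < |z|} ⊆ Ioi x ∪ Iic (-x) := fun z (hz : x < |z|) =>
    (lt_abs.mp hz).imp_right fun h => (lt_neg.mp h).le
  calc gaussianReal 0 1 {z | x < |z|}
      ≤ gaussianReal 0 1 (Ioi x) + gaussianReal 0 1 (Iic (-x)) :=
        (measure_mono hsub).trans (measure_union_le _ _)
    _ = 2 * ENNReal.ofReal (gaussTail x) := by
        rw [gaussianReal_zero_one_Ioi, gaussianReal_zero_one_Iic_neg, two_mul]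

lemma gaussianReal_zero_one_lt_abs_mul_lt {ε σ t : ℝ} (hε : 0 < ε) (hε' : ε ≤ 1) (hσ : 0 ≤ σ)
    (ht : erfInv (ε / 2) * σ < t) :
    gaussianReal 0 1 {z | t < |σ * z|} < ENNReal.ofReal ε := by
  obtain ⟨s, hst, hqs⟩ : ∃ s, s * σ < t ∧ erfInv (ε / 2) < s :=
    ((((continuous_mul_const σ).tendsto _).eventually_lt_const ht).filter_mono
      nhdsWithin_le_nhds |>.and (self_mem_nhdsWithin (s := Ioi _))).exists
  have hsub : {z | t < |σ * z|} ⊆ {z | s < |z|} := by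
    intro z (hz : t < |σ * z|)
    rw [abs_mul, abs_of_nonneg hσ] at hz
    exact lt_of_mul_lt_mul_right (by linarith) hσ
  have htail : gaussTail s < ε / 2 := by
    simpa only [gaussTail_erfInv (half_pos hε) (by linarith)] using strictAnti_gaussTail hqs
  calc gaussianReal 0 1 {z | t < |σ * z|}
      ≤ 2 * ENNReal.ofReal (gaussTail s) :=
        (measure_mono hsub).trans (gaussianReal_zero_one_lt_abs_le s)
    _ = ENNReal.ofReal (2 * gaussTail s) := by
        rw [ENNReal.ofReal_mul zero_le_two, ENNReal.ofReal_ofNat]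
    _ < ENNReal.ofReal ε := (ENNReal.ofReal_lt_ofReal_iff hε).mpr (by linarith)

lemma gaussianReal_sq_eq_map (m s : ℝ) :
    gaussianReal m (s ^ 2).toNNReal = (gaussianReal 0 1).map fun z => m + s * z := by
  rw [show (fun z : ℝ => m + s * z) = (m + ·) ∘ (s * ·) from rfl,
    ← Measure.map_map (by fun_prop) (by fun_prop), gaussianReal_map_const_mul,
    gaussianReal_map_const_add]
  congr 1
  · simp
  · ext; simp [sq_nonneg]

lemma map_dotProduct_pi_gaussianReal {ι : Type*} [Fintype ι] (φ m : ι → ℝ) (v : ι → NNReal) :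
    (Measure.pi fun i => gaussianReal (m i) (v i)).map (fun ω => φ ⬝ᵥ ω)
      = gaussianReal (φ ⬝ᵥ m) (∑ i, φ i ^ 2 * v i).toNNReal := by
  set P := Measure.pi fun i => gaussianReal (m i) (v i)
  have hmem (i : ι) : MemLp (fun z => φ i * z) 2 (gaussianReal (m i) (v i)) :=
    (memLp_id_gaussianReal 2).const_mul (φ i)
  have hlaw (i : ι) : HasGaussianLaw (fun ω : ι → ℝ => φ i * ω i) P := by
    refine ⟨?_⟩
    have hmap := Measure.map_map (μ := P) (measurable_const_mul (φ i)) (measurable_pi_apply i)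
    rw [Function.comp_def, (measurePreserving_eval _ i).map_eq, gaussianReal_map_const_mul] at hmap
    rw [← hmap]
    infer_instance
  have hmean : P[fun ω => φ ⬝ᵥ ω] = φ ⬝ᵥ m := by
    simp only [dotProduct]
    rw [integral_finsetSum _ fun i _ => (hlaw i).integrable]
    refine Finset.sum_congr rfl fun i _ => ?_
    rw [integral_comp_eval (hmem i).aestronglyMeasurable, integral_const_mul,
      integral_id_gaussianReal]
  have hvar : Var[fun ω => φ ⬝ᵥ ω; P] = ∑ i, φ i ^ 2 * v i := by
    have hvar_mul (i : ι) : Var[fun z => φ i * z; gaussianReal (m i) (v i)] = φ i ^ 2 * v i := by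
      rw [variance_const_mul, variance_fun_id_gaussianReal]
    rw [← Finset.sum_congr rfl fun i _ => hvar_mul i, ← variance_sum_pi hmem, Finset.sum_fn]
    rfl
  have hsum := iIndepFun.hasGaussianLaw_fun_sum hlaw
    (iIndepFun_pi fun i => (hmem i).aemeasurable)
  rw [← hmean, ← hvar]
  exact hsum.map_eq_gaussianReal

end StandardNormal

section IsotropicGaussian

open ProbabilityTheory

variable {L : ℕ}

/-- The isotropic Gaussian distribution `N(m, I_L)`, given by its density; `gaussObs A x` unfolds to
`isotropicGaussian (A *ᵥ x)`. -/
noncomputable def isotropicGaussian (m : Fin L → ℝ) : Measure (Fin L → ℝ) :=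
  volume.withDensity fun ω => ENNReal.ofReal (stdGaussDensity (ω - m))

lemma stdGaussDensity_sub_eq_prod (ω m : Fin L → ℝ) :
    stdGaussDensity (ω - m) = ∏ i, gaussianPDFReal (m i) 1 (ω i) := by
  have hconst : (√(2 * π))⁻¹ ^ L = (2 * π) ^ (-(L : ℝ) / 2) := by
    rw [Real.sqrt_eq_rpow, ← Real.rpow_neg (by positivity), ← Real.rpow_natCast,
      ← Real.rpow_mul (by positivity)]
    congr 1
    ring
  simp only [gaussianPDFReal, stdGaussDensity, Finset.prod_mul_distrib, Finset.prod_const,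
    Finset.card_univ, Fintype.card_fin, ← Real.exp_sum, NNReal.coe_one, mul_one, hconst,
    Pi.sub_apply]
  rw [← Finset.sum_div, Finset.sum_neg_distrib]

lemma integrable_stdGaussDensity : Integrable (stdGaussDensity : (Fin L → ℝ) → ℝ) := by
  have h : (stdGaussDensity : (Fin L → ℝ) → ℝ) = fun ω => ∏ i, gaussianPDFReal 0 1 (ω i) :=
    funext fun ω => by simpa using stdGaussDensity_sub_eq_prod ω 0
  rw [h]
  exact Integrable.fintype_prod fun _ => integrable_gaussianPDFReal 0 1

lemma pi_withDensity_ofReal {ι : Type*} [Fintype ι] {Ω : ι → Type*} [∀ i, MeasurableSpace (Ω i)]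
    {μ : ∀ i, Measure (Ω i)} [∀ i, SigmaFinite (μ i)] {f : ∀ i, Ω i → ℝ}
    (hf : ∀ i, Integrable (f i) (μ i)) (hf' : ∀ i z, 0 ≤ f i z) :
    Measure.pi (fun i => (μ i).withDensity fun z => ENNReal.ofReal (f i z))
      = (Measure.pi μ).withDensity fun ω => ENNReal.ofReal (∏ i, f i (ω i)) := by
  have (i : ι) : IsFiniteMeasure ((μ i).withDensity fun z => ENNReal.ofReal (f i z)) :=
    isFiniteMeasure_withDensity_ofReal (hf i).2
  refine Measure.pi_eq fun s hs => ?_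
  rw [withDensity_apply _ (.univ_pi hs), Measure.restrict_pi_pi,
    ← ofReal_integral_eq_lintegral_ofReal
      (Integrable.fintype_prod_dep fun i => (hf i).restrict)
      (Eventually.of_forall fun ω => Finset.prod_nonneg fun i _ => hf' i (ω i)),
    integral_fintype_prod_eq_prod,
    ENNReal.ofReal_prod_of_nonneg fun i _ => integral_nonneg (hf' i)]
  refine Finset.prod_congr rfl fun i _ => ?_
  rw [withDensity_apply _ (hs i), ofReal_integral_eq_lintegral_ofReal (hf i).restrict
    (Eventually.of_forall (hf' i))]

lemma isotropicGaussian_eq_pi (m : Fin L → ℝ) :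
    isotropicGaussian m = Measure.pi fun i => gaussianReal (m i) 1 := by
  simp_rw [gaussianReal_of_var_ne_zero _ one_ne_zero, gaussianPDF_def]
  rw [pi_withDensity_ofReal (fun i => integrable_gaussianPDFReal (m i) 1)
    (fun i => gaussianPDFReal_nonneg (m i) 1), ← volume_pi]
  simp_rw [isotropicGaussian, stdGaussDensity_sub_eq_prod]

instance (m : Fin L → ℝ) : IsProbabilityMeasure (isotropicGaussian m) := by
  rw [isotropicGaussian_eq_pi]
  infer_instance

lemma isotropicGaussian_dotProduct_preimage (m φ : Fin L → ℝ) {S : Set ℝ} (hS : MeasurableSet S) :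
    isotropicGaussian m {ω | φ ⬝ᵥ ω ∈ S}
      = gaussianReal 0 1 {z | φ ⬝ᵥ m + euclNorm φ * z ∈ S} := by
  have hvar : ∑ i, φ i ^ 2 * ((1 : NNReal) : ℝ) = euclNorm φ ^ 2 := by
    simp only [euclNorm_sq, dotProduct, NNReal.coe_one, mul_one, ← sq]
  have hdot : Continuous fun ω : Fin L → ℝ => φ ⬝ᵥ ω := by fun_prop
  calc isotropicGaussian m {ω | φ ⬝ᵥ ω ∈ S}
      = (Measure.pi fun i => gaussianReal (m i) 1).map (fun ω => φ ⬝ᵥ ω) S := by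
        rw [isotropicGaussian_eq_pi, Measure.map_apply hdot.measurable hS]
        rfl
    _ = gaussianReal 0 1 {z | φ ⬝ᵥ m + euclNorm φ * z ∈ S} := by
        rw [map_dotProduct_pi_gaussianReal, hvar, gaussianReal_sq_eq_map,
          Measure.map_apply (by fun_prop) hS]
        rfl

lemma stdGaussDensity_sub_le_exp_mul (ω m : Fin L → ℝ) :
    stdGaussDensity (ω - m)
      ≤ Real.exp (euclNorm m ^ 2 / 2) * stdGaussDensity ((√2)⁻¹ • ω) := by
  have hscale : ∑ i, ((√2)⁻¹ • ω) i ^ 2 = ∑ i, ω i ^ 2 / 2 :=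
    Finset.sum_congr rfl fun i _ => by
      rw [Pi.smul_apply, smul_eq_mul, mul_pow, inv_pow, Real.sq_sqrt zero_le_two, inv_mul_eq_div]
  have hsum : ∑ i, (ω i ^ 2 / 2 - m i * m i) ≤ ∑ i, (ω - m) i ^ 2 :=
    Finset.sum_le_sum fun i _ => by
      rw [Pi.sub_apply]
      nlinarith [sq_nonneg (ω i - 2 * m i)]
  rw [Finset.sum_sub_distrib, ← dotProduct, ← euclNorm_sq] at hsum
  rw [stdGaussDensity, stdGaussDensity, mul_left_comm, ← Real.exp_add, hscale]
  gcongr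
  linarith

lemma exists_isFiniteMeasure_isotropicGaussian_le (R : ℝ) :
    ∃ ν : Measure (Fin L → ℝ), IsFiniteMeasure ν ∧
      ∀ m, euclNorm m ≤ R → isotropicGaussian m ≤ ν := by
  refine ⟨volume.withDensity fun ω =>
    ENNReal.ofReal (Real.exp (R ^ 2 / 2) * stdGaussDensity ((√2)⁻¹ • ω)),
    isFiniteMeasure_withDensity_ofReal ?_, fun m hm => ?_⟩
  · exact ((integrable_stdGaussDensity.comp_smul (by positivity)).const_mul _).2
  · refine withDensity_mono (Eventually.of_forall fun ω => ENNReal.ofReal_le_ofReal ?_)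
    refine (stdGaussDensity_sub_le_exp_mul ω m).trans ?_
    have hm0 := euclNorm_nonneg m
    have hdens : 0 ≤ stdGaussDensity ((√2)⁻¹ • ω) := by unfold stdGaussDensity; positivity
    gcongr

end IsotropicGaussian

section NeymanPearson

lemma withDensity_add_withDensity_compl_le {Ω : Type*} [MeasurableSpace Ω] {μ : Measure Ω}
    {p q : Ω → ℝ≥0∞} {H S : Set Ω} (hH : MeasurableSet H) (hS : MeasurableSet S)
    (hle : ∀ ω ∈ H, p ω ≤ q ω) (hge : ∀ ω ∈ Hᶜ, q ω ≤ p ω) :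
    μ.withDensity p H + μ.withDensity q Hᶜ ≤ μ.withDensity p S + μ.withDensity q Sᶜ := by
  rw [withDensity_apply _ hH, withDensity_apply _ hH.compl, withDensity_apply _ hS,
    withDensity_apply _ hS.compl]
  calc (∫⁻ ω in H, p ω ∂μ) + ∫⁻ ω in Hᶜ, q ω ∂μ
      = (∫⁻ ω in H, min (p ω) (q ω) ∂μ) + ∫⁻ ω in Hᶜ, min (p ω) (q ω) ∂μ := by
        congr 1
        · exact setLIntegral_congr_fun hH fun ω hω => (min_eq_left (hle ω hω)).symm
        · exact setLIntegral_congr_fun hH.compl fun ω hω => (min_eq_right (hge ω hω)).symm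
    _ = (∫⁻ ω in S, min (p ω) (q ω) ∂μ) + ∫⁻ ω in Sᶜ, min (p ω) (q ω) ∂μ := by
        rw [lintegral_add_compl _ hH, lintegral_add_compl _ hS]
    _ ≤ (∫⁻ ω in S, p ω ∂μ) + ∫⁻ ω in Sᶜ, q ω ∂μ := by
        gcongr
        · exact min_le_left _ _
        · exact min_le_right _ _

variable {L : ℕ}

lemma stdGaussDensity_sub_le_iff (ω m m' : Fin L → ℝ) :
    stdGaussDensity (ω - m) ≤ stdGaussDensity (ω - m')
      ↔ (m - m') ⬝ᵥ ω ≤ (m ⬝ᵥ m - m' ⬝ᵥ m') / 2 := by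
  have hexpand (w : Fin L → ℝ) : ∑ i, (ω - w) i ^ 2 = ω ⬝ᵥ ω - 2 * w ⬝ᵥ ω + w ⬝ᵥ w := by
    simp only [dotProduct, Finset.mul_sum, ← Finset.sum_sub_distrib, ← Finset.sum_add_distrib]
    exact Finset.sum_congr rfl fun i _ => by rw [Pi.sub_apply]; ring
  rw [stdGaussDensity, stdGaussDensity, mul_le_mul_iff_right₀ (by positivity), Real.exp_le_exp,
    hexpand, hexpand, sub_dotProduct]
  constructor <;> intro h <;> linarith

lemma isotropicGaussian_lt_dotProduct (m : Fin L → ℝ) {v : Fin L → ℝ} (hv : v ≠ 0) (s : ℝ) :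
    isotropicGaussian m {ω | v ⬝ᵥ m + euclNorm v * s < v ⬝ᵥ ω} = ENNReal.ofReal (gaussTail s) := by
  have hpos : 0 < euclNorm v := (euclNorm_nonneg v).lt_of_ne' (euclNorm_eq_zero.not.mpr hv)
  rw [← gaussianReal_zero_one_Ioi]
  refine (isotropicGaussian_dotProduct_preimage m v measurableSet_Ioi).trans (congrArg _ ?_)
  ext z
  simp [hpos]

lemma isotropicGaussian_dotProduct_le (m : Fin L → ℝ) {v : Fin L → ℝ} (hv : v ≠ 0) (s : ℝ) :
    isotropicGaussian m {ω | v ⬝ᵥ ω ≤ v ⬝ᵥ m - euclNorm v * s} = ENNReal.ofReal (gaussTail s) := by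
  have hpos : 0 < euclNorm v := (euclNorm_nonneg v).lt_of_ne' (euclNorm_eq_zero.not.mpr hv)
  rw [← gaussianReal_zero_one_Iic_neg]
  refine (isotropicGaussian_dotProduct_preimage m v measurableSet_Iic).trans (congrArg _ ?_)
  ext z
  simp [sub_eq_add_neg, ← mul_neg, hpos]

lemma isotropicGaussian_stdGaussDensity_le_add_compl {m m' : Fin L → ℝ} (hne : m ≠ m') :
    isotropicGaussian m {ω | stdGaussDensity (ω - m) ≤ stdGaussDensity (ω - m')}
        + isotropicGaussian m' {ω | stdGaussDensity (ω - m) ≤ stdGaussDensity (ω - m')}ᶜ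
      = 2 * ENNReal.ofReal (gaussTail (euclNorm (m - m') / 2)) := by
  set v := m - m' with hv
  have hv0 : v ≠ 0 := sub_ne_zero.mpr hne
  have hsum : v ⬝ᵥ m + v ⬝ᵥ m' = m ⬝ᵥ m - m' ⬝ᵥ m' := by
    rw [hv, sub_dotProduct, sub_dotProduct, dotProduct_comm m' m]
    ring
  have hdiff : v ⬝ᵥ m - v ⬝ᵥ m' = euclNorm v * euclNorm v := by
    rw [← sq, euclNorm_sq, ← dotProduct_sub]
  simp only [stdGaussDensity_sub_le_iff, compl_ofPred, not_le]
  rw [two_mul]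
  congr 1
  · rw [← isotropicGaussian_dotProduct_le m hv0,
      show (m ⬝ᵥ m - m' ⬝ᵥ m') / 2 = v ⬝ᵥ m - euclNorm v * (euclNorm v / 2) by linarith]
  · rw [← isotropicGaussian_lt_dotProduct m' hv0,
      show (m ⬝ᵥ m - m' ⬝ᵥ m') / 2 = v ⬝ᵥ m' + euclNorm v * (euclNorm v / 2) by linarith]

lemma continuous_stdGaussDensity : Continuous (stdGaussDensity : (Fin L → ℝ) → ℝ) := by
  unfold stdGaussDensity
  fun_prop

lemma two_mul_gaussTail_le_isotropicGaussian_add (m m' : Fin L → ℝ) {S : Set (Fin L → ℝ)}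
    (hS : MeasurableSet S) :
    2 * ENNReal.ofReal (gaussTail (euclNorm (m - m') / 2))
      ≤ isotropicGaussian m S + isotropicGaussian m' Sᶜ := by
  rcases eq_or_ne m m' with rfl | hne
  · rw [measure_add_measure_compl hS, measure_univ, sub_self, euclNorm_eq_zero.mpr rfl, zero_div,
      gaussTail_zero, ← ENNReal.ofReal_ofNat, ← ENNReal.ofReal_mul zero_le_two,
      ENNReal.ofReal_le_one]
    norm_num
  have hmeas : MeasurableSet {ω | stdGaussDensity (ω - m) ≤ stdGaussDensity (ω - m')} :=
    (isClosed_le (continuous_stdGaussDensity.comp (continuous_sub_right m))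
      (continuous_stdGaussDensity.comp (continuous_sub_right m'))).measurableSet
  rw [← isotropicGaussian_stdGaussDensity_le_add_compl hne]
  exact withDensity_add_withDensity_compl_le hmeas hS
    (fun _ hω => ENNReal.ofReal_le_ofReal hω)
    (fun _ hω => ENNReal.ofReal_le_ofReal (le_of_not_ge hω))

end NeymanPearson

section ErrorLevels

variable {Ω α : Type*} [MeasurableSpace Ω] {P : α → Measure Ω} {θ : α → ℝ} {X : Set α}
  {est : Ω → ℝ} {ε : ℝ}

/-- The accuracies which the estimate `est` of `θ` attains with error probability below `ε`
uniformly over `X`, when the observation under `x` has distribution `P x`. The `ε`-risk is the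
infimum of this set; `gaussRisk` unfolds to the case `P = gaussObs A`, `θ = (g ⬝ᵥ ·)`. -/
def errorLevels (P : α → Measure Ω) (θ : α → ℝ) (X : Set α) (est : Ω → ℝ) (ε : ℝ) : Set ℝ :=
  {δ | (⨆ x ∈ X, P x {ω | δ < |est ω - θ x|}) < ENNReal.ofReal ε}

lemma measure_lt_of_mem_errorLevels {δ : ℝ} (hδ : δ ∈ errorLevels P θ X est ε) {x : α}
    (hx : x ∈ X) : P x {ω | δ < |est ω - θ x|} < ENNReal.ofReal ε :=
  (le_iSup₂ (f := fun x (_ : x ∈ X) => P x {ω | δ < |est ω - θ x|}) x hx).trans_lt hδ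

lemma nonneg_of_mem_errorLevels [∀ x, IsProbabilityMeasure (P x)] (hX : X.Nonempty) (hε : ε ≤ 1)
    {δ : ℝ} (hδ : δ ∈ errorLevels P θ X est ε) : 0 ≤ δ := by
  by_contra! hneg
  obtain ⟨x, hx⟩ := hX
  have huniv : {ω | δ < |est ω - θ x|} = univ :=
    eq_univ_of_forall fun ω => hneg.trans_le (abs_nonneg _)
  have h := measure_lt_of_mem_errorLevels hδ hx
  rw [huniv, measure_univ] at h
  exact h.not_ge (ENNReal.ofReal_le_one.mpr hε)

lemma tendsto_measure_lt_abs_atTop_zero {ν : Measure Ω} [IsFiniteMeasure ν]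
    (hest : Measurable est) : Tendsto (fun r : ℝ => ν {ω | r < |est ω|}) atTop (𝓝 0) := by
  have h := tendsto_measure_norm_gt_of_isTightMeasureSet
    (isTightMeasureSet_singleton (μ := ν.map est))
  simp only [mem_singleton_iff, iSup_iSup_eq_left] at h
  refine h.congr fun r => ?_
  rw [Measure.map_apply hest (measurableSet_lt measurable_const measurable_norm)]
  rfl

lemma nonempty_errorLevels {ν : Measure Ω} [IsFiniteMeasure ν] (hP : ∀ x ∈ X, P x ≤ ν) {C : ℝ}
    (hθ : ∀ x ∈ X, |θ x| ≤ C) (hest : Measurable est) (hε : 0 < ε) :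
    (errorLevels P θ X est ε).Nonempty := by
  obtain ⟨r, hr⟩ := ((tendsto_measure_lt_abs_atTop_zero (ν := ν) hest).eventually_lt_const
    (ENNReal.ofReal_pos.mpr hε)).exists
  refine ⟨r + C, (iSup₂_le fun x hx => ?_).trans_lt hr⟩
  refine (measure_mono fun ω (hω : r + C < |est ω - θ x|) => ?_).trans (hP x hx _)
  change r < |est ω|
  linarith [abs_sub (est ω) (θ x), hθ x hx]

/-- Le Cam's two-point method: the event that `est` errs by more than `δ` at `x` is a test
between `x` and `y`. -/
lemma half_sub_le_of_mem_errorLevels {x y : α} (hx : x ∈ X) (hy : y ∈ X)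
    (htest : ∀ S, MeasurableSet S → 2 * ENNReal.ofReal ε ≤ P x S + P y Sᶜ)
    (hest : Measurable est) {δ : ℝ} (hδ : δ ∈ errorLevels P θ X est ε) :
    (θ x - θ y) / 2 ≤ δ := by
  by_contra! hlt
  have hsub : {ω | δ < |est ω - θ x|}ᶜ ⊆ {ω | δ < |est ω - θ y|} := by
    intro ω hω
    simp only [mem_compl_iff, mem_ofPred_eq, not_lt] at hω ⊢
    linarith [(abs_le.mp hω).1, le_abs_self (est ω - θ y)]
  have herr : P x {ω | δ < |est ω - θ x|} + P y {ω | δ < |est ω - θ x|}ᶜ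
      < 2 * ENNReal.ofReal ε := by
    rw [two_mul]
    exact ENNReal.add_lt_add (measure_lt_of_mem_errorLevels hδ hx)
      ((measure_mono hsub).trans_lt (measure_lt_of_mem_errorLevels hδ hy))
  exact herr.not_ge
    (htest _ (measurableSet_lt measurable_const (hest.sub_const _).abs))

end ErrorLevels

section Minimax

lemma exists_forall_le_of_forall_exists_le {E F : Type*} [TopologicalSpace E] [AddCommGroup E]
    [IsTopologicalAddGroup E] [Module ℝ E] [ContinuousSMul ℝ E] [TopologicalSpace F]
    [AddCommGroup F] [IsTopologicalAddGroup F] [Module ℝ F] [ContinuousSMul ℝ F]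
    {β : Type*} [LinearOrder β] [DenselyOrdered β] {X : Set E} {Y : Set F} {f : E → F → β} {t : β}
    (hX : IsCompact X) (hXc : Convex ℝ X) (hXne : X.Nonempty) (hYc : Convex ℝ Y)
    (hfX : ∀ y ∈ Y, LowerSemicontinuousOn (f · y) X) (hfX' : ∀ y ∈ Y, QuasiconvexOn ℝ X (f · y))
    (hfY : ∀ x ∈ X, UpperSemicontinuousOn (f x) Y) (hfY' : ∀ x ∈ X, QuasiconcaveOn ℝ Y (f x))
    (h : ∀ y ∈ Y, ∃ x ∈ X, f x y ≤ t) : ∃ x ∈ X, ∀ y ∈ Y, f x y ≤ t := by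
  by_contra! hcon
  choose! y hyY hty using hcon
  obtain ⟨s, hsX, hXs⟩ := hX.elim_nhdsWithin_subcover (fun x => {z | t < f z (y x)})
    fun x hx => hfX (y x) (hyY x hx) x hx t (hty x hx)
  classical
  obtain ⟨y₀, hy₀, hlt⟩ := Sion.exists_lt_iInf_of_lt_iInf_of_finite (s := s.image y) hXne hX
    hfX hfX' hYc hfY hfY' hXc (Finset.finite_toSet _)
    (by simpa [subset_def] using fun x hx => hyY x (hsX x hx))
    (t := t) fun z hz => by simpa using hXs hz
  obtain ⟨x, hx, hxt⟩ := h y₀ hy₀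
  exact (hlt x hx).not_ge hxt

end Minimax

section SaddlePoint

variable {L n : ℕ} (A : Matrix (Fin L) (Fin n) ℝ) (g : Fin n → ℝ) (ε : ℝ)

lemma continuous_PsiFun :
    Continuous fun z : (Fin L → ℝ) × (Fin n → ℝ) × (Fin n → ℝ) =>
      PsiFun A g ε z.2.1 z.2.2 z.1 := by
  have := continuous_euclNorm (L := L)
  unfold PsiFun dotProduct Matrix.mulVec dotProduct
  fun_prop

lemma continuous_PsiFun_left (φ : Fin L → ℝ) :
    Continuous fun p : (Fin n → ℝ) × (Fin n → ℝ) => PsiFun A g ε p.1 p.2 φ :=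
  (continuous_PsiFun A g ε).comp (Continuous.prodMk_right φ)

lemma continuous_PsiFun_right (x y : Fin n → ℝ) : Continuous (PsiFun A g ε x y) :=
  (continuous_PsiFun A g ε).comp (Continuous.prodMk_left (x, y))

lemma concaveOn_PsiFun_left {X : Set (Fin n → ℝ)} (hX : Convex ℝ X) (φ : Fin L → ℝ) :
    ConcaveOn ℝ (X ×ˢ X) fun p => PsiFun A g ε p.1 p.2 φ := by
  refine ⟨hX.prod hX, fun p _ p' _ a b _ _ hab => le_of_eq ?_⟩
  simp only [PsiFun, Prod.fst_add, Prod.snd_add, Prod.smul_fst, Prod.smul_snd, Matrix.mulVec_sub,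
    Matrix.mulVec_add, Matrix.mulVec_smul, dotProduct_add, dotProduct_smul, dotProduct_sub,
    smul_eq_mul]
  linear_combination (2 * erfInv (ε / 2) * euclNorm φ) * hab

lemma convexOn_PsiFun_right (hq : 0 ≤ erfInv (ε / 2)) (x y : Fin n → ℝ) :
    ConvexOn ℝ univ (PsiFun A g ε x y) := by
  have hlin : ConvexOn ℝ univ fun φ : Fin L → ℝ => φ ⬝ᵥ A.mulVec (y - x) :=
    ((dotProductBilin ℝ ℝ).flip (A.mulVec (y - x))).convexOn convex_univ
  exact ((convexOn_const (g ⬝ᵥ x - g ⬝ᵥ y) convex_univ).add hlin).add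
    (convexOn_euclNorm.smul (mul_nonneg zero_le_two hq))

variable {X : Set (Fin n → ℝ)}

lemma PsiBar_eq_sSup_image (φ : Fin L → ℝ) :
    PsiBar A g ε X φ = sSup ((fun p => PsiFun A g ε p.1 p.2 φ) '' X ×ˢ X) := by
  simp only [PsiBar, image, mem_prod, Prod.exists, and_assoc, exists_and_left, eq_comm]

lemma isGreatest_PsiBar (hX : IsCompact X) (hXne : X.Nonempty) (φ : Fin L → ℝ) :
    IsGreatest ((fun p => PsiFun A g ε p.1 p.2 φ) '' X ×ˢ X) (PsiBar A g ε X φ) := by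
  rw [PsiBar_eq_sSup_image]
  exact ((hX.prod hX).image (continuous_PsiFun_left A g ε φ)).isGreatest_sSup
    ((hXne.prod hXne).image _)

lemma continuous_PsiBar (hX : IsCompact X) : Continuous (PsiBar A g ε X) := by
  rw [funext (PsiBar_eq_sSup_image A g ε)]
  exact (hX.prod hX).continuous_sSup (continuous_PsiFun A g ε)

lemma exists_isLeast_PsiBar (hX : IsCompact X) (hXne : X.Nonempty) (hq : 0 < erfInv (ε / 2)) :
    ∃ φ₀, IsLeast {v | ∃ φ, v = PsiBar A g ε X φ} (PsiBar A g ε X φ₀) := by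
  have hgrowth (φ : Fin L → ℝ) : 2 * erfInv (ε / 2) * ‖φ‖ ≤ PsiBar A g ε X φ := by
    obtain ⟨x, hx⟩ := hXne
    calc 2 * erfInv (ε / 2) * ‖φ‖ ≤ 2 * erfInv (ε / 2) * euclNorm φ := by
          gcongr
          exact norm_le_euclNorm φ
      _ = PsiFun A g ε x x φ := by simp [PsiFun]
      _ ≤ PsiBar A g ε X φ :=
          (isGreatest_PsiBar A g ε hX ⟨x, hx⟩ φ).2 ⟨(x, x), ⟨hx, hx⟩, rfl⟩
  obtain ⟨φ₀, hφ₀⟩ := (continuous_PsiBar A g ε hX).exists_forall_le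
    (tendsto_atTop_mono hgrowth (tendsto_norm_cocompact_atTop.const_mul_atTop (by positivity)))
  exact ⟨φ₀, ⟨φ₀, rfl⟩, by rintro _ ⟨φ, rfl⟩; exact hφ₀ φ⟩

lemma exists_forall_le_PsiFun (hX : IsCompact X) (hXne : X.Nonempty) (hXcv : Convex ℝ X)
    (hq : 0 ≤ erfInv (ε / 2)) {m : ℝ} (hm : ∀ φ, m ≤ PsiBar A g ε X φ) :
    ∃ x ∈ X, ∃ y ∈ X, ∀ φ, m ≤ PsiFun A g ε x y φ := by
  obtain ⟨⟨x, y⟩, ⟨hx, hy⟩, hxy⟩ := exists_forall_le_of_forall_exists_le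
    (f := fun (p : (Fin n → ℝ) × (Fin n → ℝ)) φ => -PsiFun A g ε p.1 p.2 φ) (Y := univ) (t := -m)
    (hX.prod hX) (hXcv.prod hXcv) (hXne.prod hXne) convex_univ
    (fun φ _ => (continuous_PsiFun_left A g ε φ).neg.lowerSemicontinuous.lowerSemicontinuousOn _)
    (fun φ _ => (concaveOn_PsiFun_left A g ε hXcv φ).neg.quasiconvexOn)
    (fun p _ =>
      (continuous_PsiFun_right A g ε p.1 p.2).neg.upperSemicontinuous.upperSemicontinuousOn _)
    (fun p _ => (convexOn_PsiFun_right A g ε hq p.1 p.2).neg.quasiconcaveOn)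
    (fun φ _ => by
      obtain ⟨p, hp, hpφ⟩ := (isGreatest_PsiBar A g ε hX hXne φ).1
      exact ⟨p, hp, neg_le_neg ((hm φ).trans_eq hpφ.symm)⟩)
  exact ⟨x, hx, y, hy, fun φ => neg_le_neg_iff.mp (hxy φ (mem_univ φ))⟩

lemma exists_le_sub_and_euclNorm_le (hX : IsCompact X) (hXne : X.Nonempty) (hXcv : Convex ℝ X)
    (hq : 0 ≤ erfInv (ε / 2)) {m : ℝ} (hm : ∀ φ, m ≤ PsiBar A g ε X φ) :
    ∃ x ∈ X, ∃ y ∈ X, m ≤ g ⬝ᵥ x - g ⬝ᵥ y ∧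
      euclNorm (A.mulVec (x - y)) ≤ 2 * erfInv (ε / 2) := by
  obtain ⟨x, hx, y, hy, hxy⟩ := exists_forall_le_PsiFun A g ε hX hXne hXcv hq hm
  refine ⟨x, hx, y, hy, ?_, ?_⟩
  · simpa [PsiFun, euclNorm_eq_zero.mpr rfl] using hxy 0
  · refine euclNorm_le_of_forall_dotProduct_le (c := g ⬝ᵥ x - g ⬝ᵥ y - m) (by positivity)
      fun φ => ?_
    have h := hxy φ
    rw [PsiFun, ← neg_sub x y, Matrix.mulVec_neg, dotProduct_neg] at h
    linarith

end SaddlePoint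

section AffineEstimate

open ProbabilityTheory

variable {L n : ℕ} (A : Matrix (Fin L) (Fin n) ℝ) (g : Fin n → ℝ) {X : Set (Fin n → ℝ)}

instance (x : Fin n → ℝ) : IsProbabilityMeasure (gaussObs A x) :=
  inferInstanceAs (IsProbabilityMeasure (isotropicGaussian (A.mulVec x)))

lemma gaussRisk_le_of_mem_errorLevels (hXne : X.Nonempty) {est : (Fin L → ℝ) → ℝ} {ε δ : ℝ}
    (hε : ε ≤ 1) (hδ : δ ∈ errorLevels (gaussObs A) (g ⬝ᵥ ·) X est ε) :
    gaussRisk A g X est ε ≤ δ :=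
  csInf_le ⟨0, fun _ hρ => nonneg_of_mem_errorLevels (P := gaussObs A) hXne hε hρ⟩ hδ

lemma isGreatest_sSup_exists_mem_eq {α : Type*} [TopologicalSpace α] {S : Set α} {f : α → ℝ}
    (hS : IsCompact S) (hSne : S.Nonempty) (hf : ContinuousOn f S) :
    IsGreatest {v | ∃ x ∈ S, v = f x} (sSup {v | ∃ x ∈ S, v = f x}) := by
  have himage : {v | ∃ x ∈ S, v = f x} = f '' S := by simp only [image, eq_comm]
  rw [himage]
  exact (hS.image_of_continuousOn hf).isGreatest_sSup (hSne.image f)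

lemma abs_dotProduct_mulVec_add_cStar_sub_le (hX : IsCompact X) (ε : ℝ) (φ : Fin L → ℝ)
    {x : Fin n → ℝ} (hx : x ∈ X) :
    |φ ⬝ᵥ A.mulVec x + cStar A g X φ - g ⬝ᵥ x|
      ≤ 1 / 2 * PsiBar A g ε X φ - erfInv (ε / 2) * euclNorm φ := by
  have hXne : X.Nonempty := ⟨x, hx⟩
  obtain ⟨⟨x₀, hx₀, hmax₁⟩, hub₁⟩ := isGreatest_sSup_exists_mem_eq hX hXne
    (f := fun x => g ⬝ᵥ x - φ ⬝ᵥ A.mulVec x) (by fun_prop)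
  obtain ⟨⟨y₀, hy₀, hmax₂⟩, hub₂⟩ := isGreatest_sSup_exists_mem_eq hX hXne
    (f := fun y => -(g ⬝ᵥ y) + φ ⬝ᵥ A.mulVec y) (by fun_prop)
  have h₁ := hub₁ ⟨x, hx, rfl⟩
  have h₂ := hub₂ ⟨x, hx, rfl⟩
  have hΨ : PsiFun A g ε x₀ y₀ φ ≤ PsiBar A g ε X φ :=
    (isGreatest_PsiBar A g ε hX hXne φ).2 ⟨(x₀, y₀), ⟨hx₀, hy₀⟩, rfl⟩
  rw [PsiFun, Matrix.mulVec_sub, dotProduct_sub] at hΨ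
  rw [cStar, abs_le]
  constructor <;> linarith

lemma gaussRisk_affine_le (hX : IsCompact X) (hXne : X.Nonempty) {ε : ℝ} (hε : 0 < ε)
    (hε' : ε ≤ 1) (φ : Fin L → ℝ) :
    gaussRisk A g X (fun ω => φ ⬝ᵥ ω + cStar A g X φ) ε ≤ 1 / 2 * PsiBar A g ε X φ := by
  refine le_of_forall_gt_imp_ge_of_dense fun δ hδ =>
    gaussRisk_le_of_mem_errorLevels A g hXne hε' ?_
  set b := 1 / 2 * PsiBar A g ε X φ - erfInv (ε / 2) * euclNorm φ with hb
  have htail : gaussianReal 0 1 {z | δ - b < |euclNorm φ * z|} < ENNReal.ofReal ε :=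
    gaussianReal_zero_one_lt_abs_mul_lt hε hε' (euclNorm_nonneg φ) (by linarith)
  refine (iSup₂_le fun x hx => ?_).trans_lt htail
  have hbias : |φ ⬝ᵥ A.mulVec x + cStar A g X φ - g ⬝ᵥ x| ≤ b :=
    abs_dotProduct_mulVec_add_cStar_sub_le A g hX ε φ hx
  have hsub : {ω | δ < |φ ⬝ᵥ ω + cStar A g X φ - g ⬝ᵥ x|}
      ⊆ {ω | φ ⬝ᵥ ω ∈ {u | δ - b < |u - φ ⬝ᵥ A.mulVec x|}} := by
    intro ω (hω : δ < |φ ⬝ᵥ ω + cStar A g X φ - g ⬝ᵥ x|)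
    have htri := abs_add_le (φ ⬝ᵥ ω - φ ⬝ᵥ A.mulVec x)
      (φ ⬝ᵥ A.mulVec x + cStar A g X φ - g ⬝ᵥ x)
    rw [← add_sub_assoc, ← add_assoc, sub_add_cancel] at htri
    change δ - b < |φ ⬝ᵥ ω - φ ⬝ᵥ A.mulVec x|
    linarith
  calc gaussObs A x {ω | δ < |φ ⬝ᵥ ω + cStar A g X φ - g ⬝ᵥ x|}
      ≤ isotropicGaussian (A.mulVec x) {ω | φ ⬝ᵥ ω ∈ {u | δ - b < |u - φ ⬝ᵥ A.mulVec x|}} :=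
        measure_mono hsub
    _ = gaussianReal 0 1 {z | δ - b < |euclNorm φ * z|} := by
        rw [isotropicGaussian_dotProduct_preimage _ _
          (measurableSet_lt measurable_const (by fun_prop))]
        simp only [mem_ofPred_eq, add_sub_cancel_left]

end AffineEstimate

section LowerBound

variable {L n : ℕ} (A : Matrix (Fin L) (Fin n) ℝ) (g : Fin n → ℝ) {X : Set (Fin n → ℝ)}

lemma nonempty_errorLevels_gaussObs (hX : IsCompact X) {est : (Fin L → ℝ) → ℝ}
    (hest : Measurable est) {ε : ℝ} (hε : 0 < ε) :
    (errorLevels (gaussObs A) (g ⬝ᵥ ·) X est ε).Nonempty := by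
  obtain ⟨R, hR⟩ := hX.exists_bound_of_continuousOn
    (f := fun x => euclNorm (A.mulVec x)) (continuous_euclNorm.comp (by fun_prop)).continuousOn
  obtain ⟨C, hC⟩ := hX.exists_bound_of_continuousOn (f := fun x => g ⬝ᵥ x) (by fun_prop)
  obtain ⟨ν, hν, hle⟩ := exists_isFiniteMeasure_isotropicGaussian_le (L := L) R
  exact nonempty_errorLevels (P := gaussObs A)
    (fun x hx => hle _ ((le_abs_self _).trans (hR x hx))) hC hest hε

lemma two_mul_ofReal_le_gaussObs_add {ε : ℝ} (hε : 0 < ε) (hε' : ε ≤ 1 / 2) {x y : Fin n → ℝ}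
    (hxy : euclNorm (A.mulVec (x - y)) ≤ 2 * erfInv ε) {S : Set (Fin L → ℝ)}
    (hS : MeasurableSet S) :
    2 * ENNReal.ofReal ε ≤ gaussObs A x S + gaussObs A y Sᶜ := by
  rw [Matrix.mulVec_sub] at hxy
  have htail : ε ≤ gaussTail (euclNorm (A.mulVec x - A.mulVec y) / 2) :=
    (gaussTail_erfInv hε hε').ge.trans (strictAnti_gaussTail.antitone (by linarith))
  calc 2 * ENNReal.ofReal ε
      ≤ 2 * ENNReal.ofReal (gaussTail (euclNorm (A.mulVec x - A.mulVec y) / 2)) := by gcongr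
    _ ≤ gaussObs A x S + gaussObs A y Sᶜ :=
        two_mul_gaussTail_le_isotropicGaussian_add (A.mulVec x) (A.mulVec y) hS

lemma half_sub_le_gaussRiskStar (hX : IsCompact X) {ε : ℝ} (hε : 0 < ε) (hε' : ε ≤ 1 / 2)
    {x y : Fin n → ℝ} (hx : x ∈ X) (hy : y ∈ X)
    (hxy : euclNorm (A.mulVec (x - y)) ≤ 2 * erfInv ε) :
    (g ⬝ᵥ x - g ⬝ᵥ y) / 2 ≤ gaussRiskStar A g X ε := by
  refine le_csInf ⟨_, fun _ => 0, measurable_const, rfl⟩ ?_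
  rintro _ ⟨est, hest, rfl⟩
  exact le_csInf (nonempty_errorLevels_gaussObs A g hX hest hε) fun δ hδ =>
    half_sub_le_of_mem_errorLevels (P := gaussObs A) (θ := (g ⬝ᵥ ·)) hx hy
      (fun _ => two_mul_ofReal_le_gaussObs_add A hε hε' hxy) hest hδ

lemma half_mul_sub_le_gaussRiskStar (hX : IsCompact X) (hXcv : Convex ℝ X) {ε : ℝ} (hε : 0 < ε)
    (hε' : ε ≤ 1 / 2) {x y : Fin n → ℝ} (hx : x ∈ X) (hy : y ∈ X) {c : ℝ}
    (hc : c ∈ Icc (0 : ℝ) 1) (hxy : c * euclNorm (A.mulVec (x - y)) ≤ 2 * erfInv ε) :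
    c * (g ⬝ᵥ x - g ⬝ᵥ y) / 2 ≤ gaussRiskStar A g X ε := by
  have hz : y + c • (x - y) ∈ X := hXcv.add_smul_sub_mem hy hx hc
  have h := half_sub_le_gaussRiskStar A g hX hε hε' hz hy <| by
    rwa [add_sub_cancel_left, Matrix.mulVec_smul, euclNorm_smul, abs_of_nonneg hc.1]
  rwa [← dotProduct_sub, add_sub_cancel_left, dotProduct_smul, smul_eq_mul, dotProduct_sub] at h

lemma half_mul_le_erfInv_div_mul_gaussRiskStar (hX : IsCompact X) (hXne : X.Nonempty)
    (hXcv : Convex ℝ X) {ε : ℝ} (hε : 0 < ε) (hε' : ε < 1 / 2) {m : ℝ}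
    (hm : ∀ φ, m ≤ PsiBar A g ε X φ) :
    1 / 2 * m ≤ erfInv (ε / 2) / erfInv ε * gaussRiskStar A g X ε := by
  have hr : 0 < erfInv ε := erfInv_pos hε hε'
  have hq : 0 < erfInv (ε / 2) := erfInv_pos (by positivity) (by linarith)
  have hrq : erfInv ε ≤ erfInv (ε / 2) := strictAntiOn_erfInv.antitoneOn
    ⟨by positivity, by linarith⟩ ⟨hε, hε'.le⟩ (by linarith)
  obtain ⟨x, hx, y, hy, hle, hxy⟩ := exists_le_sub_and_euclNorm_le A g ε hX hXne hXcv hq.le hm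
  have hlower : erfInv ε / erfInv (ε / 2) * (g ⬝ᵥ x - g ⬝ᵥ y) / 2 ≤ gaussRiskStar A g X ε := by
    refine half_mul_sub_le_gaussRiskStar A g hX hXcv hε hε'.le hx hy
      ⟨by positivity, div_le_one_of_le₀ hrq hq.le⟩ ?_
    rw [div_mul_eq_mul_div, div_le_iff₀ hq]
    linarith [mul_le_mul_of_nonneg_left hxy hr.le]
  calc 1 / 2 * m ≤ (g ⬝ᵥ x - g ⬝ᵥ y) / 2 := by linarith
    _ = erfInv (ε / 2) / erfInv ε * (erfInv ε / erfInv (ε / 2) * (g ⬝ᵥ x - g ⬝ᵥ y) / 2) := by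
      field_simp
    _ ≤ erfInv (ε / 2) / erfInv ε * gaussRiskStar A g X ε := by gcongr

end LowerBound

/-- **Proposition 4.2.** In the Gaussian observation model, for every
`ε ∈ (0, 1/2)` the infimum of `Ψ̄` is attained at some `φ_*`, and the affine
estimate `ĝ_ε(ω) = φ_*ᵀω + c_*` satisfies
`Risk(ĝ_ε; ε) ≤ Ψ_*(ε) ≤ [ErfInv(ε/2)/ErfInv(ε)]·Risk_*(ε)`; moreover
`ErfInv(ε/2)/ErfInv(ε) < √(2 ln(2/ε))/ErfInv(ε)`. -/
theorem gauss_affine_estimate_erfInv_ratio {L n : ℕ}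
    (A : Matrix (Fin L) (Fin n) ℝ) (g : Fin n → ℝ) (X : Set (Fin n → ℝ))
    (hXne : X.Nonempty) (hXcp : IsCompact X) (hXcv : Convex ℝ X)
    (ε : ℝ) (hε : ε ∈ Set.Ioo (0 : ℝ) (1/2)) :
    (∃ φstar : Fin L → ℝ,
      IsLeast {v : ℝ | ∃ φ : Fin L → ℝ, v = PsiBar A g ε X φ} (PsiBar A g ε X φstar)
      ∧ gaussRisk A g X (fun ω => φstar ⬝ᵥ ω + cStar A g X φstar) ε ≤ PsiStar A g ε X)
    ∧ PsiStar A g ε X ≤ (erfInv (ε / 2) / erfInv ε) * gaussRiskStar A g X ε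
    ∧ erfInv (ε / 2) / erfInv ε < Real.sqrt (2 * Real.log (2 / ε)) / erfInv ε := by
  obtain ⟨hε₀, hε₁⟩ := hε
  have hr : 0 < erfInv ε := erfInv_pos hε₀ hε₁
  have hq : 0 < erfInv (ε / 2) := erfInv_pos (by positivity) (by linarith)
  obtain ⟨φ₀, hφ₀⟩ := exists_isLeast_PsiBar A g ε hXcp hXne hq
  have hΨ : PsiStar A g ε X = 1 / 2 * PsiBar A g ε X φ₀ := by rw [PsiStar, hφ₀.csInf_eq]
  rw [hΨ]
  refine ⟨⟨φ₀, hφ₀, gaussRisk_affine_le A g hXcp hXne hε₀ (by linarith) φ₀⟩, ?_, ?_⟩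
  · exact half_mul_le_erfInv_div_mul_gaussRiskStar A g hXcp hXne hXcv hε₀ hε₁
      fun φ => hφ₀.2 ⟨φ, rfl⟩
  · have hsqrt := erfInv_lt_sqrt_two_mul_log (y := ε / 2) (by positivity) (by linarith)
    rw [one_div_div] at hsqrt
    exact div_lt_div_of_pos_right hsqrt hr
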